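/- Let m ≥ 2 and 0 ≤ a ≤ m−2 be integers and q a complex number with 0 < |q| < 1. Then (q^{a+1}; q^{2m+1})_∞ · (q^{2m−a}; q^{2m+1})_∞ · (q^{2m+1}; q^{2m+1})_∞ / (q;q)_∞ = Σ_{k₁,…,k_{m−1} ≥ 0} (q^{k₁²+⋯+k_{m−1}² + k_{a+1}+⋯+k_{m−1}} / (q;q)_{k_{m−1}}) · (∏_{i=1, i≠a}^{m−2} [k_{i+1} choose k_i]_q) · [k_{a+1}+1 choose k_a]_q, with the convention k₀ = 0 when a = 0; the series converges absolutely. -/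

import Mathlib

/-- The finite q-Pochhammer symbol `(x;q)_n = ∏_{i=1}^n (1 - x q^{i-1})`. -/
noncomputable def qPoch (q x : ℂ) (n : ℕ) : ℂ := ∏ i ∈ Finset.range n, (1 - x * q ^ i)

/-- The infinite q-Pochhammer symbol `(x;q)_∞ = ∏_{i=1}^∞ (1 - x q^{i-1})`. -/
noncomputable def qPochInf (q x : ℂ) : ℂ := ∏' i : ℕ, (1 - x * q ^ i)

/-- The Gaussian binomial coefficient `[n choose c]_q`. -/
noncomputable def qBinom (q : ℂ) (n c : ℕ) : ℂ :=
  if c ≤ n then qPoch q q n / (qPoch q q c * qPoch q q (n - c)) else 0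

/-- Extends a tuple `(k₁,…,k_m)` to all of `ℕ` by `0` (in particular `k₀ = 0`). -/
def Kfun (m : ℕ) (k : Fin m → ℕ) (i : ℕ) : ℕ :=
  if h : 1 ≤ i ∧ i ≤ m then k ⟨i - 1, by omega⟩ else 0

/-- The Andrews–Gordon-type summand
`q^{k₁²+⋯+k_{m-1}²+k_{a+1}+⋯+k_{m-1}} / (q;q)_{k_{m-1}}
 · (∏_{i=1,i≠a}^{m-2} [k_{i+1},k_i]) · [k_{a+1}+1,k_a]`, with `k₀ = 0`. -/
noncomputable def AGterm (q : ℂ) (m a : ℕ) (k : Fin (m - 1) → ℕ) : ℂ :=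
  q ^ (∑ i ∈ Finset.Ico 1 m, (Kfun (m - 1) k i) ^ 2 + ∑ i ∈ Finset.Ico (a + 1) m, Kfun (m - 1) k i)
    / qPoch q q (Kfun (m - 1) k (m - 1)) *
  (∏ i ∈ (Finset.Ico 1 (m - 1)).erase a,
    qBinom q (Kfun (m - 1) k (i + 1)) (Kfun (m - 1) k i)) *
  qBinom q (Kfun (m - 1) k (a + 1) + 1) (Kfun (m - 1) k a)

/-!
Write a Gaussian binomial coefficient as `(q;q)_n / ((q;q)_c (q;q)_{n-c})`, where `1 / (q;q)_{n-c}`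
vanishes for `c > n`. Then the summations over `k_1, k_2, …`, carried out one after the other, are
successive applications of Bailey's lemma: for `β_n = ∑_r α_r / ((q;q)_{n+e+r} (q;q)_{n-r})`,
`∑_x q^{x²+ex} β_x / (q;q)_{n-x} = ∑_r q^{r²+er} α_r / ((q;q)_{n+e+r} (q;q)_{n-r})`.
Each application multiplies `α_r` by `q^{r²+er}`, starting from the unit Bailey pair: there
`α_r = (-1)^r q^{r(r-1)/2}`, and that `β_n = 0` for `n > 0` is the finite Jacobi triple product at
`1`. The exceptional factor `[k_{a+1}+1 choose k_a]` is what converts a Bailey pair relative to `1`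
(`e = 0`) into one relative to `q` (`e = 1`); this is possible because `α_{-r} = q^r α_r`. In the
limit `n → ∞` the sum becomes a theta series over `(q;q)_∞`, which Jacobi's triple product
evaluates.
-/

open Filter Topology

namespace AndrewsGordon

/-- The reciprocal `1 / (q;q)_n`, extended to all integers `n` by the convention that it vanishes
for `n < 0`. The recursion `(1 - q ^ n) / (q;q)_n = 1 / (q;q)_{n-1}` then holds for every `n`. -/
noncomputable def qPochInv (q : ℂ) (n : ℤ) : ℂ :=
  if 0 ≤ n then (qPoch q q n.toNat)⁻¹ else 0

/-- The term `(-1)^r q^{r(r-1)/2} x^r` of the bilateral theta series. -/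
noncomputable def thetaTerm (q x : ℂ) (r : ℤ) : ℂ := (-1) ^ r * q ^ (r * (r - 1) / 2) * x ^ r

/-- The bilateral sum `∑_r α_r / ((q;q)_{M+r} (q;q)_{N-r})`. For `M = n + e` and `N = n` this is,
up to the factor `(q;q)_e`, the sequence `β_n` of the Bailey pair relative to `q ^ e` that has
`α` as its other member. Only the terms with `-M ≤ r ≤ N` are nonzero. -/
noncomputable def baileySum (q : ℂ) (α : ℤ → ℂ) (M N : ℤ) : ℂ :=
  ∑' r : ℤ, α r * (qPochInv q (M + r) * qPochInv q (N - r))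

/-- The `j`-th term of the `q`-Chu–Vandermonde sum
`∑_j q^{j(j+s)} / ((q;q)_j (q;q)_{M-j} (q;q)_{j+s}) = 1 / ((q;q)_M (q;q)_{M+s})`. -/
noncomputable def vandermondeTerm (q : ℂ) (M s j : ℤ) : ℂ :=
  q ^ (j * (j + s)) * (qPochInv q j * qPochInv q (M - j) * qPochInv q (j + s))

variable {q Q x : ℂ}

theorem qPoch_zero (q x : ℂ) : qPoch q x 0 = 1 := Finset.prod_range_zero _

theorem qPoch_succ (q x : ℂ) (n : ℕ) : qPoch q x (n + 1) = qPoch q x n * (1 - x * q ^ n) :=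
  Finset.prod_range_succ _ _

theorem qPoch_ne_zero (hq : ¬IsOfFinOrder q) (n : ℕ) : qPoch q q n ≠ 0 := by
  refine Finset.prod_ne_zero_iff.2 fun i _ h => hq (isOfFinOrder_iff_pow_eq_one.2 ?_)
  exact ⟨i + 1, i.succ_pos, by rw [pow_succ', ← sub_eq_zero.1 h]⟩

theorem qPochInv_natCast (q : ℂ) (n : ℕ) : qPochInv q n = (qPoch q q n)⁻¹ := by
  simp [qPochInv]

theorem qPochInv_zero (q : ℂ) : qPochInv q 0 = 1 := by simp [qPochInv, qPoch]

theorem qPochInv_of_neg (q : ℂ) {n : ℤ} (hn : n < 0) : qPochInv q n = 0 := if_neg hn.not_ge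

theorem qPochInv_sub_one (hq : ¬IsOfFinOrder q) (n : ℤ) :
    qPochInv q (n - 1) = (1 - q ^ n) * qPochInv q n := by
  rcases lt_trichotomy n 0 with hn | rfl | hn
  · rw [qPochInv_of_neg q hn, qPochInv_of_neg q (by omega), mul_zero]
  · rw [qPochInv_of_neg q (by omega), zpow_zero, sub_self, zero_mul]
  · obtain ⟨k, rfl⟩ : ∃ k : ℕ, n = (k + 1 : ℕ) := ⟨(n - 1).toNat, by omega⟩
    have h := qPoch_ne_zero hq (k + 1)
    rw [qPoch_succ, ← pow_succ'] at h
    rw [show ((k + 1 : ℕ) : ℤ) - 1 = k by omega, zpow_natCast, qPochInv_natCast, qPochInv_natCast,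
      qPoch_succ, ← pow_succ']
    field_simp [left_ne_zero_of_mul h, right_ne_zero_of_mul h]

theorem qBinom_eq_mul_qPochInv (q : ℂ) (n c : ℕ) :
    qBinom q n c = qPoch q q n * (qPochInv q c * qPochInv q (n - c)) := by
  unfold qBinom
  split_ifs with h
  · rw [← Nat.cast_sub h, qPochInv_natCast, qPochInv_natCast, ← mul_inv, div_eq_mul_inv]
  · rw [qPochInv_of_neg q (show (n : ℤ) - c < 0 by omega), mul_zero, mul_zero]

/-! ### Bailey's lemma -/

theorem vandermondeTerm_pascal (hq : ¬IsOfFinOrder q) (hq0 : q ≠ 0) (M s j : ℤ) :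
    (1 - q ^ (M + 1)) * vandermondeTerm q (M + 1) s j =
      vandermondeTerm q M s j + q ^ (M + s + 1) * vandermondeTerm q M (s + 1) (j - 1) := by
  have pascal : 1 - q ^ (M + 1) = (1 - q ^ (M + 1 - j)) + q ^ (M + 1 - j) * (1 - q ^ j) := by
    rw [mul_one_sub, ← zpow_add₀ hq0, sub_add_cancel]
    ring
  have hpow : q ^ (j * (j + s)) * q ^ (M + 1 - j) =
      q ^ (M + s + 1) * q ^ ((j - 1) * (j - 1 + (s + 1))) := by
    rw [← zpow_add₀ hq0, ← zpow_add₀ hq0]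
    congr 1
    ring
  have h₁ := qPochInv_sub_one hq (M + 1 - j)
  have h₂ := qPochInv_sub_one hq j
  simp only [vandermondeTerm]
  rw [pascal, show M - (j - 1) = M + 1 - j by ring, show M - j = M + 1 - j - 1 by ring,
    show j - 1 + (s + 1) = j + s by ring, h₁, h₂]
  rw [show j - 1 + (s + 1) = j + s by ring] at hpow
  linear_combination (1 - q ^ j) * qPochInv q j * qPochInv q (M + 1 - j) * qPochInv q (j + s) * hpow

theorem sum_vandermondeTerm (hq : ¬IsOfFinOrder q) (hq0 : q ≠ 0) (M : ℕ) (s : ℤ) :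
    ∑ j ∈ Finset.range (M + 1), vandermondeTerm q M s j = qPochInv q M * qPochInv q (M + s) := by
  induction M generalizing s with
  | zero => simp [vandermondeTerm, qPochInv_zero]
  | succ M ih =>
    have hM : 1 - q ^ (M + 1 : ℤ) ≠ 0 := fun h => hq <|
      isOfFinOrder_iff_pow_eq_one.2 ⟨M + 1, M.succ_pos, by exact_mod_cast (sub_eq_zero.1 h).symm⟩
    have last : vandermondeTerm q M s (M + 1 : ℕ) = 0 := by
      simp [vandermondeTerm, qPochInv_of_neg q (show (-1 : ℤ) < 0 by omega)]
    have first : vandermondeTerm q M (s + 1) ((0 : ℕ) - 1) = 0 := by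
      simp [vandermondeTerm, qPochInv_of_neg q (show (-1 : ℤ) < 0 by omega)]
    have h₁ := qPochInv_sub_one hq (M + 1)
    have h₂ := qPochInv_sub_one hq (M + s + 1)
    rw [add_sub_cancel_right] at h₁ h₂
    refine mul_left_cancel₀ hM ?_
    push_cast
    rw [Finset.mul_sum]
    simp only [vandermondeTerm_pascal hq hq0, Finset.sum_add_distrib, ← Finset.mul_sum]
    rw [Finset.sum_range_succ, last, Finset.sum_range_succ' _ (M + 1), first]
    simp only [Nat.cast_succ, add_sub_cancel_right, add_zero, ih]
    rw [← add_assoc (M : ℤ), add_right_comm (M : ℤ) 1 s]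
    linear_combination qPochInv q M * h₂ + qPochInv q (M + s + 1) * h₁

theorem sum_qPochInv_bailey (hq : ¬IsOfFinOrder q) (hq0 : q ≠ 0) {e : ℤ} (he : e ≤ 1) (n : ℕ)
    (r : ℤ) :
    ∑ x ∈ Finset.range (n + 1), q ^ (x ^ 2 + e * x : ℤ) * qPochInv q (n - x) *
        (qPochInv q (x + e + r) * qPochInv q (x - r)) =
      q ^ (r ^ 2 + e * r) * (qPochInv q (n + e + r) * qPochInv q (n - r)) := by
  wlog hr : 0 ≤ r generalizing r
  -- The identity is invariant under `r ↦ -e - r`, and `r` or `-e - r` is nonnegative as `e ≤ 1`.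
  · convert this (-e - r) (by omega) using 1
    · refine Finset.sum_congr rfl fun x _ => ?_
      rw [show (x : ℤ) + e + (-e - r) = x - r by ring, show (x : ℤ) - (-e - r) = x + e + r by ring,
        mul_comm (qPochInv q (x + e + r))]
    · rw [show (n : ℤ) + e + (-e - r) = n - r by ring, show (n : ℤ) - (-e - r) = n + e + r by ring,
        mul_comm (qPochInv q (n + e + r)), show (-e - r) ^ 2 + e * (-e - r) = r ^ 2 + e * r by ring]
  lift r to ℕ using hr
  rcases lt_or_ge n r with hnr | hrn
  · rw [qPochInv_of_neg q (show (n : ℤ) - r < 0 by omega), mul_zero, mul_zero]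
    refine Finset.sum_eq_zero fun x hx => ?_
    rw [qPochInv_of_neg q (n := (x : ℤ) - r) (by grind), mul_zero, mul_zero]
  obtain ⟨M, rfl⟩ := Nat.exists_eq_add_of_le hrn
  rw [add_assoc, Finset.sum_range_add, Finset.sum_eq_zero fun x hx => ?_, zero_add]
  · have vandermonde := sum_vandermondeTerm hq hq0 M (2 * r + e)
    rw [show ((r + M : ℕ) : ℤ) + e + r = M + (2 * r + e) by push_cast; ring,
      show ((r + M : ℕ) : ℤ) - r = M by push_cast; ring, mul_comm (qPochInv q (M + _)),
      ← vandermonde, Finset.mul_sum]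
    refine Finset.sum_congr rfl fun j _ => ?_
    push_cast [vandermondeTerm]
    rw [show (r + j : ℤ) ^ 2 + e * (r + j) = (r ^ 2 + e * r) + j * (j + (2 * r + e)) by ring,
      zpow_add₀ hq0, add_sub_add_left_eq_sub, add_sub_cancel_left,
      show (r + j + e + r : ℤ) = j + (2 * r + e) by ring]
    ring
  · rw [qPochInv_of_neg q (n := (x : ℤ) - r) (by grind), mul_zero, mul_zero]

theorem summable_baileySum (q : ℂ) (α : ℤ → ℂ) (M N : ℤ) :
    Summable fun r : ℤ => α r * (qPochInv q (M + r) * qPochInv q (N - r)) := by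
  refine summable_of_hasFiniteSupport ((Set.finite_Icc (-M) N).subset fun r hr => ?_)
  contrapose! hr
  rw [Set.mem_Icc, not_and_or] at hr
  rw [Function.notMem_support]
  rcases hr with hr | hr
  · rw [qPochInv_of_neg q (show M + r < 0 by omega), zero_mul, mul_zero]
  · rw [qPochInv_of_neg q (show N - r < 0 by omega), mul_zero, mul_zero]

theorem tsum_mul_baileySum_mul_qPochInv (hq : ¬IsOfFinOrder q) (hq0 : q ≠ 0) {e : ℤ} (he : e ≤ 1)
    (α : ℤ → ℂ) (n : ℕ) :
    ∑' x : ℕ, q ^ (x ^ 2 + e * x : ℤ) * baileySum q α (x + e) x * qPochInv q (n - x) =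
      baileySum q (fun r => q ^ (r ^ 2 + e * r) * α r) (n + e) n := by
  rw [tsum_eq_sum (s := Finset.range (n + 1)) fun x hx => by
    rw [qPochInv_of_neg q (by grind), mul_zero]]
  simp only [baileySum, ← tsum_mul_left, ← tsum_mul_right]
  rw [← Summable.tsum_finsetSum fun x _ => ((summable_baileySum ..).mul_left _).mul_right _]
  refine tsum_congr fun r => ?_
  rw [mul_right_comm, mul_comm, ← sum_qPochInv_bailey hq hq0 he, Finset.mul_sum]
  refine Finset.sum_congr rfl fun x _ => ?_
  ring

theorem baileySum_comm (q : ℂ) (α : ℤ → ℂ) (M N : ℤ) :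
    baileySum q α M N = baileySum q (fun r => α (-r)) N M := by
  rw [baileySum, ← (Equiv.neg ℤ).tsum_eq]
  refine tsum_congr fun r => ?_
  rw [Equiv.neg_apply, ← sub_eq_add_neg, sub_neg_eq_add, mul_comm (qPochInv q (M - r))]

theorem baileySum_succ_of_symm (hq : ¬IsOfFinOrder q) (hq0 : q ≠ 0) {α : ℤ → ℂ}
    (hα : ∀ r, α (-r) = q ^ r * α r) (n : ℤ) :
    baileySum q (fun r => q ^ r * α r) (n + 1) n =
      (1 - q ^ (n + 1)) * baileySum q α (n + 1) (n + 1) := by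
  have split (r : ℤ) : q ^ r * α r * (qPochInv q (n + 1 + r) * qPochInv q (n - r)) =
      q ^ r * α r * (qPochInv q (n + 1 + r) * qPochInv q (n + 1 - r)) -
        q ^ (n + 1) * (α r * (qPochInv q (n + 1 + r) * qPochInv q (n + 1 - r))) := by
    have hpow : q ^ (n + 1) = q ^ r * q ^ (n + 1 - r) := by
      rw [← zpow_add₀ hq0, add_sub_cancel]
    rw [show n - r = n + 1 - r - 1 by ring, qPochInv_sub_one hq, hpow]
    ring
  have symm : baileySum q (fun r => q ^ r * α r) (n + 1) (n + 1) =
      baileySum q α (n + 1) (n + 1) := by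
    rw [baileySum_comm q α]
    simp only [hα]
  rw [baileySum, tsum_congr split,
    (summable_baileySum ..).tsum_sub ((summable_baileySum ..).mul_left _), tsum_mul_left, sub_mul,
    one_mul, ← symm]
  simp only [baileySum] at symm ⊢
  rw [symm]

/-! ### The finite Jacobi triple product -/

theorem thetaTerm_zero (q x : ℂ) : thetaTerm q x 0 = 1 := by simp [thetaTerm]

theorem two_mul_mul_pred_ediv_two (r : ℤ) : 2 * (r * (r - 1) / 2) = r * (r - 1) :=
  Int.two_mul_ediv_two_of_even (Int.even_mul_pred_self r)

theorem thetaTerm_succ (hq0 : q ≠ 0) (hx0 : x ≠ 0) (r : ℤ) :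
    thetaTerm q x (r + 1) = -(x * q ^ r) * thetaTerm q x r := by
  have h : (r + 1) * (r + 1 - 1) / 2 = r * (r - 1) / 2 + r := by
    rw [← Int.add_mul_ediv_right _ _ two_ne_zero]
    ring_nf
  rw [thetaTerm, h, zpow_add₀ hq0, zpow_add_one₀ hx0, zpow_add_one₀ (by norm_num), thetaTerm]
  ring

theorem thetaTerm_neg (hq0 : q ≠ 0) (x : ℂ) (r : ℤ) :
    thetaTerm q x (-r) = thetaTerm q (q / x) r := by
  have h : -r * (-r - 1) / 2 = r * (r - 1) / 2 + r := by
    rw [← Int.add_mul_ediv_right _ _ two_ne_zero]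
    ring_nf
  rw [thetaTerm, thetaTerm, h, zpow_add₀ hq0, div_zpow, zpow_neg, zpow_neg, ← inv_zpow]
  norm_num
  ring

theorem thetaTerm_mul (q x y : ℂ) (r : ℤ) : thetaTerm q (x * y) r = x ^ r * thetaTerm q y r := by
  rw [thetaTerm, thetaTerm, mul_zpow, mul_left_comm]

theorem zpow_mul_thetaTerm (hq0 : q ≠ 0) (e : ℤ) (r : ℤ) :
    q ^ (r ^ 2 + e * r) * thetaTerm Q x r = thetaTerm (q ^ 2 * Q) (q ^ (1 + e) * x) r := by
  have h : r ^ 2 + e * r = 2 * (r * (r - 1) / 2) + (1 + e) * r := by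
    rw [two_mul_mul_pred_ediv_two]
    ring
  rw [thetaTerm_mul, thetaTerm, thetaTerm, h, zpow_add₀ hq0, mul_zpow, zpow_mul, zpow_mul]
  norm_cast
  ring

theorem baileySum_thetaTerm_succ (hq : ¬IsOfFinOrder q) (hq0 : q ≠ 0) (hx0 : x ≠ 0) (M N : ℤ) :
    (1 - q ^ (M + N + 1)) * baileySum q (thetaTerm q x) M (N + 1) =
      (1 - x * q ^ N) * baileySum q (thetaTerm q x) M N := by
  set β : ℤ → ℂ := fun r => q ^ (N + 1 - r) * thetaTerm q x r
  have split (r : ℤ) :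
      (1 - q ^ (M + N + 1)) * (thetaTerm q x r * (qPochInv q (M + r) * qPochInv q (N + 1 - r))) =
        thetaTerm q x r * (qPochInv q (M + r) * qPochInv q (N - r)) +
          β r * (qPochInv q (M - 1 + r) * qPochInv q (N + 1 - r)) := by
    have hpow : q ^ (M + N + 1) = q ^ (N + 1 - r) * q ^ (M + r) := by
      rw [← zpow_add₀ hq0]
      ring_nf
    rw [show N - r = N + 1 - r - 1 by ring, show M - 1 + r = M + r - 1 by ring,
      qPochInv_sub_one hq, qPochInv_sub_one hq, hpow]
    ring
  have shift : baileySum q β (M - 1) (N + 1) = -(x * q ^ N) * baileySum q (thetaTerm q x) M N := by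
    rw [baileySum, ← (Equiv.addRight (1 : ℤ)).tsum_eq, baileySum, ← tsum_mul_left]
    refine tsum_congr fun r => ?_
    have hpow : q ^ N = q ^ (N - r) * q ^ r := by rw [← zpow_add₀ hq0, sub_add_cancel]
    simp only [β, Equiv.coe_addRight, thetaTerm_succ hq0 hx0, hpow, add_sub_add_right_eq_sub]
    rw [show M - 1 + (r + 1) = M + r by ring]
    ring
  rw [baileySum, ← tsum_mul_left, tsum_congr split,
    (summable_baileySum ..).tsum_add (summable_baileySum ..)]
  change baileySum q (thetaTerm q x) M N + baileySum q β (M - 1) (N + 1) = _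
  linear_combination shift

theorem qPoch_mul_baileySum_thetaTerm (hq : ¬IsOfFinOrder q) (hq0 : q ≠ 0) (hx0 : x ≠ 0)
    (M N : ℕ) :
    qPoch q q (M + N) * baileySum q (thetaTerm q x) M N =
      qPoch q x N * (qPoch q q M * baileySum q (thetaTerm q x) M 0) := by
  induction N with
  | zero => simp [qPoch]
  | succ N ih =>
    have h := baileySum_thetaTerm_succ hq hq0 hx0 M N
    norm_cast at h
    rw [← add_assoc, qPoch_succ, qPoch_succ, ← pow_succ']
    linear_combination qPoch q q (M + N) * h + (1 - x * q ^ N) * ih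

theorem baileySum_zero_zero (q : ℂ) (α : ℤ → ℂ) : baileySum q α 0 0 = α 0 := by
  rw [baileySum, tsum_eq_single 0 fun r hr => ?_]
  · simp [qPochInv_zero]
  · rcases hr.lt_or_gt with hr | hr
    · rw [qPochInv_of_neg q (show 0 + r < 0 by omega), zero_mul, mul_zero]
    · rw [qPochInv_of_neg q (show 0 - r < 0 by omega), mul_zero, mul_zero]

theorem finite_jacobi_triple_product (hq : ¬IsOfFinOrder q) (hq0 : q ≠ 0) (hx0 : x ≠ 0)
    (M N : ℕ) :
    qPoch q x N * qPoch q (q / x) M = qPoch q q (M + N) * baileySum q (thetaTerm q x) M N := by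
  have h := qPoch_mul_baileySum_thetaTerm hq hq0 (div_ne_zero hq0 hx0) 0 M
  rw [zero_add, Nat.cast_zero, baileySum_zero_zero, thetaTerm_zero,
    qPoch_zero, mul_one, mul_one] at h
  rw [qPoch_mul_baileySum_thetaTerm hq hq0 hx0, baileySum_comm]
  simp only [thetaTerm_neg hq0, h]

theorem baileySum_thetaTerm_one (hq : ¬IsOfFinOrder q) (hq0 : q ≠ 0) (n : ℕ) :
    baileySum q (thetaTerm q 1) n n = Pi.single (M := fun _ => ℂ) 0 1 n := by
  cases n with
  | zero => simp [baileySum_zero_zero, thetaTerm_zero]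
  | succ n =>
    have h := finite_jacobi_triple_product hq hq0 one_ne_zero (n + 1) (n + 1)
    have hone : qPoch q 1 (n + 1) = 0 :=
      Finset.prod_eq_zero (Finset.mem_range.2 n.succ_pos) (by simp)
    rw [hone, zero_mul, eq_comm, mul_eq_zero] at h
    rw [Pi.single_eq_of_ne n.succ_ne_zero, h.resolve_left (qPoch_ne_zero hq _)]

/-! ### Limits -/

theorem not_isOfFinOrder_of_norm_lt_one (hq : ‖q‖ < 1) : ¬IsOfFinOrder q :=
  fun h => hq.ne h.norm_eq_one

theorem summable_norm_neg_mul_pow (hq : ‖q‖ < 1) (x : ℂ) :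
    Summable fun i : ℕ => ‖-(x * q ^ i)‖ := by
  simpa [norm_mul] using (summable_geometric_of_lt_one (norm_nonneg q) hq).mul_left ‖x‖

theorem tendsto_qPoch (hq : ‖q‖ < 1) (x : ℂ) :
    Tendsto (qPoch q x) atTop (𝓝 (qPochInf q x)) := by
  have h := (multipliable_one_add_of_summable (summable_norm_neg_mul_pow hq x)).hasProd
  simp only [← sub_eq_add_neg] at h
  exact h.tendsto_prod_nat

theorem qPochInf_self_ne_zero (hq : ‖q‖ < 1) : qPochInf q q ≠ 0 := by
  have h (i : ℕ) : 1 + -(q * q ^ i) ≠ 0 := by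
    rw [← sub_eq_add_neg, ← pow_succ', sub_ne_zero]
    exact fun h => (not_isOfFinOrder_of_norm_lt_one hq)
      (isOfFinOrder_iff_pow_eq_one.2 ⟨i + 1, i.succ_pos, h.symm⟩)
  have hprod := tprod_one_add_ne_zero_of_summable h (summable_norm_neg_mul_pow hq q)
  simp only [← sub_eq_add_neg] at hprod
  exact hprod

theorem tendsto_qPochInv (hq : ‖q‖ < 1) :
    Tendsto (qPochInv q) atTop (𝓝 (qPochInf q q)⁻¹) := by
  rw [← Nat.map_cast_int_atTop, tendsto_map'_iff]
  simpa only [Function.comp_def, qPochInv_natCast] using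
    (tendsto_qPoch hq q).inv₀ (qPochInf_self_ne_zero hq)

theorem exists_norm_qPochInv_le (hq : ‖q‖ < 1) : ∃ C, ∀ n, ‖qPochInv q n‖ ≤ C := by
  have h := (tendsto_qPochInv hq).comp tendsto_natCast_atTop_atTop
  obtain ⟨C, hC⟩ := h.norm.bddAbove_range
  refine ⟨C, fun n => ?_⟩
  rcases lt_or_ge n 0 with hn | hn
  · rw [qPochInv_of_neg q hn, norm_zero]
    exact (norm_nonneg _).trans (hC ⟨0, rfl⟩)
  · lift n to ℕ using hn
    exact hC ⟨n, rfl⟩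

theorem summable_thetaTerm (hq : ‖q‖ < 1) (hq0 : q ≠ 0) (hx0 : x ≠ 0) :
    Summable (thetaTerm q x) := by
  have hne (x : ℂ) (hx0 : x ≠ 0) (r : ℤ) : thetaTerm q x r ≠ 0 := by
    simp [thetaTerm, hq0, hx0, zpow_ne_zero]
  have summable_nat (x : ℂ) (hx0 : x ≠ 0) : Summable fun n : ℕ => thetaTerm q x n := by
    refine summable_of_ratio_test_tendsto_lt_one zero_lt_one
      (.of_forall fun n => hne x hx0 n) ?_
    have ratio (n : ℕ) : ‖thetaTerm q x (n + 1 : ℕ)‖ / ‖thetaTerm q x n‖ = ‖x‖ * ‖q‖ ^ n := by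
      rw [Nat.cast_succ, thetaTerm_succ hq0 hx0, norm_mul, norm_neg, norm_mul, zpow_natCast,
        norm_pow, mul_div_cancel_right₀ _ (norm_ne_zero_iff.2 (hne x hx0 n))]
    simp only [ratio]
    simpa using (tendsto_pow_atTop_nhds_zero_of_lt_one (norm_nonneg q) hq).const_mul ‖x‖
  refine .of_nat_of_neg (summable_nat x hx0) ?_
  simpa only [thetaTerm_neg hq0] using summable_nat (q / x) (div_ne_zero hq0 hx0)

theorem summable_zpow_sq_add_mul (hq : ‖q‖ < 1) (hq0 : q ≠ 0) (e : ℤ) :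
    Summable fun r : ℤ => q ^ (r ^ 2 + e * r) := by
  have hsq : ‖q ^ 2‖ < 1 := by simpa using pow_lt_one₀ (norm_nonneg q) hq two_ne_zero
  have hx : q ^ (1 + e) * -1 ≠ 0 := mul_ne_zero (zpow_ne_zero _ hq0) (by norm_num)
  refine (summable_thetaTerm hsq (pow_ne_zero 2 hq0) hx).congr fun r => ?_
  rw [← mul_one (q ^ 2), ← zpow_mul_thetaTerm hq0, thetaTerm, one_zpow, mul_one, ← mul_zpow]
  norm_num

theorem summable_mul_of_isBigO_one {ι : Type*} {f g : ι → ℂ} (hf : Summable f)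
    (hg : g =O[cofinite] fun _ => (1 : ℝ)) : Summable fun i => f i * g i :=
  summable_of_isBigO hf.norm <| by
    simpa only [mul_one] using (Asymptotics.isBigO_refl f cofinite).norm_right.mul hg

theorem tendsto_tsum_mul_of_norm_le {ι : Type*} {f : ι → ℂ} (hf : Summable f)
    {c : ℕ → ι → ℂ} {C : ℝ} (hC : ∀ n i, ‖c n i‖ ≤ C) {L : ℂ}
    (hc : ∀ i, Tendsto (c · i) atTop (𝓝 L)) :
    Tendsto (fun n => ∑' i, f i * c n i) atTop (𝓝 ((∑' i, f i) * L)) := by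
  rw [← tsum_mul_right]
  refine tendsto_tsum_of_dominated_convergence (hf.norm.mul_right C)
    (fun i => (hc i).const_mul (f i)) (.of_forall fun n i => ?_)
  rw [norm_mul]
  exact mul_le_mul_of_nonneg_left (hC n i) (norm_nonneg _)

theorem tendsto_baileySum (hq : ‖q‖ < 1) {α : ℤ → ℂ} (hα : Summable α) (e : ℤ) :
    Tendsto (fun n : ℕ => baileySum q α (n + e) n) atTop
      (𝓝 ((∑' r, α r) * ((qPochInf q q)⁻¹ * (qPochInf q q)⁻¹))) := by
  obtain ⟨C, hC⟩ := exists_norm_qPochInv_le hq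
  refine tendsto_tsum_mul_of_norm_le hα (C := C * C) (fun n r => ?_) fun r => ?_
  · rw [norm_mul]
    exact mul_le_mul (hC _) (hC _) (norm_nonneg _) ((norm_nonneg _).trans (hC 0))
  · refine ((tendsto_qPochInv hq).comp ?_).mul ((tendsto_qPochInv hq).comp ?_)
    · exact tendsto_atTop_add_const_right _ _
        (tendsto_atTop_add_const_right _ _ tendsto_natCast_atTop_atTop)
    · exact tendsto_atTop_add_const_right _ (-r) tendsto_natCast_atTop_atTop

theorem jacobi_triple_product (hq : ‖q‖ < 1) (hq0 : q ≠ 0) (hx0 : x ≠ 0) :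
    qPochInf q x * qPochInf q (q / x) * qPochInf q q = ∑' r, thetaTerm q x r := by
  have hP := qPochInf_self_ne_zero hq
  have left := (tendsto_qPoch hq x).mul (tendsto_qPoch hq (q / x))
  have double : Tendsto (fun n : ℕ => n + n) atTop atTop :=
    tendsto_atTop_mono (fun n => n.le_add_left n) tendsto_id
  have right := ((tendsto_qPoch hq q).comp double).mul
    (tendsto_baileySum hq (summable_thetaTerm hq hq0 hx0) 0)
  simp only [finite_jacobi_triple_product (not_isOfFinOrder_of_norm_lt_one hq) hq0 hx0] at left
  simp only [add_zero, Function.comp_def] at right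
  rw [tendsto_nhds_unique left right]
  field_simp

theorem tsum_mul_baileySum (hq : ‖q‖ < 1) (hq0 : q ≠ 0) {e : ℤ} (he : e ≤ 1)
    {α : ℤ → ℂ} (hα : Summable α) :
    ∑' x : ℕ, q ^ (x ^ 2 + e * x : ℤ) * baileySum q α (x + e) x =
      (∑' r : ℤ, q ^ (r ^ 2 + e * r) * α r) * (qPochInf q q)⁻¹ := by
  obtain ⟨C, hC⟩ := exists_norm_qPochInv_le hq
  have hpow := summable_zpow_sq_add_mul hq hq0 e
  have bounded : (fun x : ℕ => baileySum q α (x + e) x) =O[cofinite] fun _ => (1 : ℝ) := by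
    rw [Nat.cofinite_eq_atTop]
    exact (tendsto_baileySum hq hα e).isBigO_one ℝ
  have left := tendsto_tsum_mul_of_norm_le
    (summable_mul_of_isBigO_one (hpow.comp_injective Nat.cast_injective) bounded)
    (c := fun n x : ℕ => qPochInv q (n - x)) (fun _ _ => hC _)
    fun x => (tendsto_qPochInv hq).comp
      (tendsto_atTop_add_const_right _ (-x : ℤ) tendsto_natCast_atTop_atTop)
  have right := tendsto_baileySum hq
    (summable_mul_of_isBigO_one hpow (hα.tendsto_cofinite_zero.isBigO_one ℝ)) e
  simp only [Function.comp_apply,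
    tsum_mul_baileySum_mul_qPochInv (not_isOfFinOrder_of_norm_lt_one hq) hq0 he] at left
  refine mul_right_cancel₀ (inv_ne_zero (qPochInf_self_ne_zero hq)) ?_
  rw [tendsto_nhds_unique left right, mul_assoc]

/-! ### Sums over chains -/

section Chain

/-- The weight `∏_{j < i} T_j(k_j, k_{j+1})` of the chain `k_0 = 0, k_1, …, k_i` whose nonzeroth
entries are given by the tuple `k`. -/
def chainTerm (T : ℕ → ℕ → ℕ → ℂ) (i : ℕ) (k : Fin i → ℕ) : ℂ :=
  ∏ j ∈ Finset.range i, T j (Kfun i k j) (Kfun i k (j + 1))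

/-- The total weight of the chains `k_0 = 0, k_1, …, k_i` that end in `k_i = x`, by recursion on
the length. -/
noncomputable def transferSum (T : ℕ → ℕ → ℕ → ℂ) : ℕ → ℕ → ℂ
  | 0 => Pi.single 0 1
  | i + 1 => fun x => ∑' y, transferSum T i y * T i y x

theorem transferSum_succ (T : ℕ → ℕ → ℕ → ℂ) (i x : ℕ) :
    transferSum T (i + 1) x = ∑' y, transferSum T i y * T i y x := rfl

variable {T : ℕ → ℕ → ℕ → ℂ} {i : ℕ}

theorem Kfun_zero (k : Fin i → ℕ) : Kfun i k 0 = 0 := by simp [Kfun]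

theorem Kfun_snoc_of_le (k : Fin i → ℕ) (x : ℕ) {j : ℕ} (hj : j ≤ i) :
    Kfun (i + 1) (Fin.snoc k x) j = Kfun i k j := by
  by_cases h : 1 ≤ j
  · rw [Kfun, dif_pos ⟨h, by omega⟩, Kfun, dif_pos ⟨h, hj⟩]
    exact Fin.snoc_castSucc (α := fun _ => ℕ) x k ⟨j - 1, by omega⟩
  · rw [Kfun, dif_neg (by omega), Kfun, dif_neg (by omega)]

theorem Kfun_snoc_last (k : Fin i → ℕ) (x : ℕ) : Kfun (i + 1) (Fin.snoc k x) (i + 1) = x := by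
  rw [Kfun, dif_pos ⟨by omega, le_rfl⟩]
  exact Fin.snoc_last (α := fun _ => ℕ) x k

theorem chainTerm_snoc (T : ℕ → ℕ → ℕ → ℂ) (k : Fin i → ℕ) (x : ℕ) :
    chainTerm T (i + 1) (Fin.snoc k x) = chainTerm T i k * T i (Kfun i k i) x := by
  rw [chainTerm, Finset.prod_range_succ, Kfun_snoc_last, Kfun_snoc_of_le k x le_rfl, chainTerm]
  congr 1
  refine Finset.prod_congr rfl fun j hj => ?_
  have hj : j < i := Finset.mem_range.1 hj
  rw [Kfun_snoc_of_le k x hj.le, Kfun_snoc_of_le k x hj]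

theorem summable_chainTerm {c : ℕ → ℝ} (hc : Summable c) (hT : ∀ j y x, ‖T j y x‖ ≤ c x) (i : ℕ) :
    Summable (chainTerm T i) := by
  induction i with
  | zero => exact .of_finite
  | succ i ih =>
    have hc0 : 0 ≤ c := fun x => (norm_nonneg _).trans (hT 0 0 x)
    rw [← (Fin.snocEquiv fun _ => ℕ).summable_iff]
    refine .of_norm_bounded (hc.mul_of_nonneg ih.norm hc0 fun _ => norm_nonneg _) fun p => ?_
    change ‖chainTerm T (i + 1) (Fin.snoc p.2 p.1)‖ ≤ _
    rw [chainTerm_snoc, norm_mul, mul_comm]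
    exact mul_le_mul_of_nonneg_right (hT ..) (norm_nonneg _)

theorem tsum_chainTerm_mul (g : ℕ → ℂ) (h : Summable fun k => chainTerm T i k * g (Kfun i k i)) :
    ∑' k, chainTerm T i k * g (Kfun i k i) = ∑' x, transferSum T i x * g x := by
  induction i generalizing g with
  | zero =>
    rw [tsum_eq_single (0 : ℕ) fun x hx => by simp [transferSum, hx]]
    simp [chainTerm, transferSum, Kfun_zero]
  | succ i ih =>
    have snoc (p : ℕ × (Fin i → ℕ)) :
        chainTerm T (i + 1) (Fin.snocEquiv (fun _ => ℕ) p) *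
            g (Kfun (i + 1) (Fin.snocEquiv (fun _ => ℕ) p) (i + 1)) =
          chainTerm T i p.2 * T i (Kfun i p.2 i) p.1 * g p.1 :=
      congrArg₂ (· * g ·) (chainTerm_snoc T p.2 p.1) (Kfun_snoc_last p.2 p.1)
    rw [← (Fin.snocEquiv fun _ => ℕ).summable_iff, Function.comp_def, funext snoc] at h
    rw [← (Fin.snocEquiv fun _ => ℕ).tsum_eq, tsum_congr snoc, h.tsum_prod]
    refine tsum_congr fun x => ?_
    dsimp only
    rw [tsum_mul_right]
    rcases eq_or_ne (g x) 0 with hx | hx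
    · rw [hx, mul_zero, mul_zero]
    · rw [ih (fun y => T i y x) ((summable_mul_right_iff hx).1 (h.prod_factor x)), transferSum_succ]

end Chain

/-! ### The Andrews–Gordon sum -/

theorem qBinom_zero_right (hq : ¬IsOfFinOrder q) (n : ℕ) : qBinom q n 0 = 1 := by
  simp [qBinom_eq_mul_qPochInv, qPochInv_zero, qPochInv_natCast, qPoch_ne_zero hq]

/-- The factor of the Andrews–Gordon summand that links `k_j = y` to `k_{j+1} = x`. The quotient
`(q;q)_y / (q;q)_x` telescopes along a chain to the `1 / (q;q)_{k_{m-1}}` of the summand. -/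
noncomputable def agWeight (q : ℂ) (a j y x : ℕ) : ℂ :=
  q ^ (x ^ 2 + if a ≤ j then x else 0) *
    (qPoch q q y / qPoch q q x * if j = a then qBinom q (x + 1) y else qBinom q x y)

theorem agWeight_self (hq : ¬IsOfFinOrder q) (a y x : ℕ) :
    agWeight q a a y x = q ^ (x ^ 2 + x) * ((1 - q ^ (x + 1)) * qPochInv q (x + 1 - y)) := by
  have hx := qPoch_ne_zero hq x
  have hy := qPoch_ne_zero hq y
  rw [agWeight, if_pos le_rfl, if_pos rfl, qBinom_eq_mul_qPochInv, qPochInv_natCast, qPoch_succ,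
    ← pow_succ']
  push_cast
  field_simp

theorem agWeight_of_ne (hq : ¬IsOfFinOrder q) {a j : ℕ} (h : j ≠ a) (y x : ℕ) :
    agWeight q a j y x = q ^ (x ^ 2 + if a ≤ j then x else 0) * qPochInv q (x - y) := by
  have hx := qPoch_ne_zero hq x
  have hy := qPoch_ne_zero hq y
  rw [agWeight, if_neg h, qBinom_eq_mul_qPochInv, qPochInv_natCast]
  field_simp

theorem prod_range_div_succ {𝕜 : Type*} [Field 𝕜] {f : ℕ → 𝕜} (hf : ∀ n, f n ≠ 0) (n : ℕ) :
    ∏ j ∈ Finset.range n, f j / f (j + 1) = f 0 / f n :=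
  Finset.prod_range_induction _ (fun n => f 0 / f n) (div_self (hf 0)) _
    fun k _ => by simp [div_mul_div_cancel₀, hf]

theorem prod_pow_agWeight (q : ℂ) (a L : ℕ) (K : ℕ → ℕ) :
    ∏ j ∈ Finset.range L, q ^ (K (j + 1) ^ 2 + if a ≤ j then K (j + 1) else 0) =
      q ^ (∑ i ∈ Finset.Ico 1 (L + 1), K i ^ 2 + ∑ i ∈ Finset.Ico (a + 1) (L + 1), K i) := by
  have h : {j ∈ Finset.Ico 0 L | a ≤ j} = Finset.Ico a L := by grind
  rw [Finset.prod_pow_eq_pow_sum, Finset.sum_add_distrib, ← Finset.sum_filter,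
    Finset.range_eq_Ico, h, Finset.sum_Ico_add' (fun i => K i ^ 2), Finset.sum_Ico_add' K, zero_add]

theorem prod_qBinom_agWeight (hq : ¬IsOfFinOrder q) {a L : ℕ} (ha : a < L) {K : ℕ → ℕ}
    (hK : K 0 = 0) :
    ∏ j ∈ Finset.range L,
        (if j = a then qBinom q (K (j + 1) + 1) (K j) else qBinom q (K (j + 1)) (K j)) =
      (∏ i ∈ (Finset.Ico 1 L).erase a, qBinom q (K (i + 1)) (K i)) *
        qBinom q (K (a + 1) + 1) (K a) := by
  rw [← Finset.prod_erase_mul _ _ (Finset.mem_range.2 ha), if_pos rfl,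
    Finset.prod_congr rfl fun j hj => if_neg (Finset.ne_of_mem_erase hj)]
  congr 1
  refine (Finset.prod_subset (by grind) fun j hj hj' => ?_).symm
  obtain rfl : j = 0 := by grind
  rw [hK, qBinom_zero_right hq]

theorem AGterm_eq_chainTerm (hq : ¬IsOfFinOrder q) {m a : ℕ} (ha : a + 2 ≤ m) :
    AGterm q m a = chainTerm (agWeight q a) (m - 1) := by
  funext k
  have hK := Kfun_zero k
  rw [AGterm, chainTerm]
  generalize Kfun (m - 1) k = K at hK ⊢
  obtain ⟨L, rfl⟩ : ∃ L, m = L + 1 := ⟨m - 1, by omega⟩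
  simp only [agWeight, Finset.prod_mul_distrib, Nat.add_sub_cancel]
  rw [prod_pow_agWeight, prod_range_div_succ (f := fun j => qPoch q q (K j))
    fun _ => qPoch_ne_zero hq _, prod_qBinom_agWeight hq (by omega) hK, hK,
    qPoch_zero]
  ring

theorem tsum_mul_baileySum_thetaTerm (hq : ¬IsOfFinOrder q) (hq0 : q ≠ 0) {e : ℕ} (he : e ≤ 1)
    (Q y : ℂ) (n : ℕ) :
    ∑' x : ℕ, q ^ (x ^ 2 + e * x) * baileySum q (thetaTerm Q y) (x + e) x * qPochInv q (n - x) =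
      baileySum q (thetaTerm (q ^ 2 * Q) (q ^ (1 + e) * y)) (n + e) n := by
  have h := tsum_mul_baileySum_mul_qPochInv hq hq0 (e := e) (by exact_mod_cast he) (thetaTerm Q y) n
  simp only [zpow_mul_thetaTerm hq0] at h
  exact_mod_cast h

theorem exists_summable_norm_agWeight_le (hq : ‖q‖ < 1) (a : ℕ) :
    ∃ c : ℕ → ℝ, Summable c ∧ ∀ j y x, ‖agWeight q a j y x‖ ≤ c x := by
  have hfin := not_isOfFinOrder_of_norm_lt_one hq
  obtain ⟨C, hC⟩ := exists_norm_qPochInv_le hq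
  have hC0 : 0 ≤ C := (norm_nonneg _).trans (hC 0)
  have hpow (x t : ℕ) : ‖q ^ (x ^ 2 + t)‖ ≤ ‖q‖ ^ x := by
    rw [norm_pow]
    exact pow_le_pow_of_le_one (norm_nonneg q) hq.le (by nlinarith)
  have htwo (n : ℕ) : ‖1 - q ^ n‖ ≤ 2 := by
    calc ‖1 - q ^ n‖ ≤ ‖(1 : ℂ)‖ + ‖q ^ n‖ := norm_sub_le _ _
      _ ≤ 2 := by
        rw [norm_one, norm_pow]
        linarith [pow_le_one₀ (n := n) (norm_nonneg q) hq.le]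
  refine ⟨fun x => ‖q‖ ^ x * (2 * C),
    (summable_geometric_of_lt_one (norm_nonneg q) hq).mul_right _, fun j y x => ?_⟩
  beta_reduce
  rcases eq_or_ne j a with rfl | hj
  · rw [agWeight_self hfin, norm_mul, norm_mul]
    gcongr
    exacts [hpow x x, htwo _, hC _]
  · rw [agWeight_of_ne hfin hj, norm_mul]
    gcongr
    exacts [hpow x _, (hC _).trans (by linarith)]

theorem transferSum_succ_eq_baileySum (hq : ¬IsOfFinOrder q) (hq0 : q ≠ 0)
    {T : ℕ → ℕ → ℕ → ℂ} {i e : ℕ} (he : e ≤ 1) {Q z : ℂ}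
    (hT : ∀ y x : ℕ, T i y x = q ^ (x ^ 2 + e * x) * qPochInv q (x - y))
    (ih : ∀ y : ℕ, transferSum T i y = q ^ (y ^ 2 + e * y) * baileySum q (thetaTerm Q z) (y + e) y)
    (x : ℕ) :
    transferSum T (i + 1) x =
      q ^ (x ^ 2 + e * x) * baileySum q (thetaTerm (q ^ 2 * Q) (q ^ (1 + e) * z)) (x + e) x := by
  rw [transferSum_succ, ← tsum_mul_baileySum_thetaTerm hq hq0 he, ← tsum_mul_left]
  refine tsum_congr fun y => ?_
  rw [ih, hT]
  ring

theorem transferSum_agWeight_of_le (hq : ¬IsOfFinOrder q) (hq0 : q ≠ 0) {a i : ℕ} (hi : i ≤ a)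
    (x : ℕ) :
    transferSum (agWeight q a) i x =
      q ^ x ^ 2 * baileySum q (thetaTerm (q ^ (2 * i + 1)) (q ^ i)) x x := by
  induction i generalizing x with
  | zero =>
    have h := baileySum_thetaTerm_one hq hq0 x
    simp only [transferSum, mul_zero, zero_add, pow_one, pow_zero, h]
    rcases x.eq_zero_or_pos with rfl | hx
    · rw [zero_pow two_ne_zero, pow_zero, one_mul]
    · rw [Pi.single_eq_of_ne hx.ne', mul_zero]
  | succ i ih =>
    have step := transferSum_succ_eq_baileySum hq hq0 zero_le_one (T := agWeight q a) (i := i)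
      (Q := q ^ (2 * i + 1)) (z := q ^ i)
      (fun y x => by rw [agWeight_of_ne hq (by omega), if_neg (by omega), zero_mul])
      (fun y => by simpa using ih (by omega) y) x
    rw [← pow_add, ← pow_add] at step
    convert step using 3 <;> ring_nf

theorem transferSum_agWeight_succ (hq : ¬IsOfFinOrder q) (hq0 : q ≠ 0) (a x : ℕ) :
    transferSum (agWeight q a) (a + 1) x = q ^ (x ^ 2 + x) *
      baileySum q (thetaTerm (q ^ (2 * (a + 1) + 1)) (q ^ (a + 2))) (x + 1) x := by
  set θ := thetaTerm (q ^ (2 * (a + 1) + 1)) (q ^ (a + 1)) with hθ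
  have bailey : ∑' y : ℕ, q ^ y ^ 2 * baileySum q (thetaTerm (q ^ (2 * a + 1)) (q ^ a)) y y *
      qPochInv q (x + 1 - y) = baileySum q θ (x + 1) (x + 1) := by
    have h := tsum_mul_baileySum_thetaTerm hq hq0 zero_le_one (q ^ (2 * a + 1)) (q ^ a) (x + 1)
    rw [← pow_add, ← pow_add, ← add_assoc, Nat.add_comm (1 + 0)] at h
    simpa [hθ, mul_add, add_comm, add_left_comm] using h
  have mul_theta (r : ℤ) : thetaTerm (q ^ (2 * (a + 1) + 1)) (q ^ (a + 2)) r = q ^ r * θ r := by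
    rw [hθ, ← thetaTerm_mul, ← pow_succ']
  have symm (r : ℤ) : θ (-r) = q ^ r * θ r := by
    rw [← mul_theta, hθ, thetaTerm_neg (pow_ne_zero _ hq0)]
    congr 1
    rw [div_eq_iff (pow_ne_zero _ hq0)]
    ring
  rw [transferSum_succ, funext mul_theta, baileySum_succ_of_symm hq hq0 symm, ← bailey,
    ← tsum_mul_left, ← tsum_mul_left]
  refine tsum_congr fun y => ?_
  rw [transferSum_agWeight_of_le hq hq0 le_rfl, agWeight_self hq]
  norm_cast
  ring

theorem transferSum_agWeight_add (hq : ¬IsOfFinOrder q) (hq0 : q ≠ 0) (a d x : ℕ) :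
    transferSum (agWeight q a) (a + 1 + d) x = q ^ (x ^ 2 + x) *
      baileySum q (thetaTerm (q ^ (2 * (a + 1 + d) + 1)) (q ^ (a + 2 + 2 * d))) (x + 1) x := by
  induction d generalizing x with
  | zero => exact transferSum_agWeight_succ hq hq0 a x
  | succ d ih =>
    rw [← add_assoc (a + 1)]
    have step := transferSum_succ_eq_baileySum hq hq0 le_rfl (T := agWeight q a) (i := a + 1 + d)
      (Q := q ^ (2 * (a + 1 + d) + 1)) (z := q ^ (a + 2 + 2 * d))
      (fun y x => by rw [agWeight_of_ne hq (by omega), if_pos (by omega), one_mul])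
      (fun y => by simpa using ih y) x
    rw [← pow_add, ← pow_add, one_mul, Nat.cast_one] at step
    convert step using 4 <;> ring_nf

theorem summable_AGterm (hq : ‖q‖ < 1) {m a : ℕ} (ha : a + 2 ≤ m) : Summable (AGterm q m a) := by
  obtain ⟨c, hc, hle⟩ := exists_summable_norm_agWeight_le hq a
  rw [AGterm_eq_chainTerm (not_isOfFinOrder_of_norm_lt_one hq) ha]
  exact summable_chainTerm hc hle _

theorem tsum_AGterm (hq : ‖q‖ < 1) (hq0 : q ≠ 0) (a d : ℕ) :
    ∑' k, AGterm q (a + 2 + d) a k =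
      (∑' r, thetaTerm (q ^ (2 * (a + 2 + d) + 1)) (q ^ (a + 4 + 2 * d)) r) * (qPochInf q q)⁻¹ := by
  have hfin := not_isOfFinOrder_of_norm_lt_one hq
  have summable := summable_AGterm hq (show a + 2 ≤ a + 2 + d by omega)
  have hQ : ‖q ^ (2 * (a + 1 + d) + 1)‖ < 1 :=
    (norm_pow q _).trans_lt (pow_lt_one₀ (norm_nonneg q) hq (Nat.succ_ne_zero _))
  have hα := summable_thetaTerm hQ (pow_ne_zero _ hq0) (pow_ne_zero (a + 2 + 2 * d) hq0)
  have bailey := tsum_mul_baileySum hq hq0 le_rfl hα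
  simp only [zpow_mul_thetaTerm hq0] at bailey
  rw [AGterm_eq_chainTerm hfin (by omega)] at summable ⊢
  have sum := tsum_chainTerm_mul (fun _ => 1) (by simpa only [mul_one] using summable)
  simp only [mul_one] at sum
  rw [sum, show a + 2 + d - 1 = a + 1 + d by omega]
  simp only [transferSum_agWeight_add hfin hq0]
  norm_cast at bailey
  rw [← pow_add, ← pow_add] at bailey
  simp only [one_mul, Nat.cast_succ] at bailey
  convert bailey using 4
  ring_nf

end AndrewsGordon

open AndrewsGordon

theorem stmt_12 (m a : ℕ) (hm : 2 ≤ m) (ha : a + 2 ≤ m) (q : ℂ)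
    (hq0 : 0 < ‖q‖) (hq : ‖q‖ < 1) :
    Summable (AGterm q m a) ∧
    qPochInf (q ^ (2 * m + 1)) (q ^ (a + 1)) * qPochInf (q ^ (2 * m + 1)) (q ^ (2 * m - a)) *
        qPochInf (q ^ (2 * m + 1)) (q ^ (2 * m + 1)) / qPochInf q q
      = ∑' k : Fin (m - 1) → ℕ, AGterm q m a k := by
  refine ⟨summable_AGterm hq ha, ?_⟩
  obtain ⟨d, rfl⟩ := Nat.exists_eq_add_of_le ha
  have hne : q ≠ 0 := norm_pos_iff.1 hq0
  have hQ : ‖q ^ (2 * (a + 2 + d) + 1)‖ < 1 :=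
    (norm_pow q _).trans_lt (pow_lt_one₀ (norm_nonneg q) hq (Nat.succ_ne_zero _))
  have hdiv : q ^ (2 * (a + 2 + d) + 1) / q ^ (a + 4 + 2 * d) = q ^ (a + 1) := by
    rw [div_eq_iff (pow_ne_zero _ hne), ← pow_add]
    ring_nf
  rw [tsum_AGterm hq hne, ← jacobi_triple_product hQ (pow_ne_zero _ hne) (pow_ne_zero _ hne), hdiv,
    show 2 * (a + 2 + d) - a = a + 4 + 2 * d by omega, div_eq_mul_inv,
    mul_comm (qPochInf _ (q ^ (a + 1)))]
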